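/- arXiv:math/0406315 — 6 statements merged into one kernel-verified Lean document; each statement's English description precedes it below -/
import Mathlib

section
/- Let g : [1,∞) → ℂ be continuous, and suppose there are real numbers α₀ < α₁ < … < α_{N−1}, all different from 1, a real δ with δ > 1 and δ > α_j for all j, complex numbers c_{j,k} (0 ≤ j ≤ N−1, k ∈ {0,1}), c₀, c₁, and a constant C such that for all r ≥ 1: |g(r) − Σ_{j=0}^{N−1} Σ_{k=0}^{1} c_{j,k} r^{−α_j} log^k r − c₀ r^{−1} log r − c₁ r^{−1}| ≤ C r^{−δ}. Then H(s) := ∫₁^∞ r^{−s} g(r) dr converges absolutely for Re(s) > max(0, max_{j} (1 − α_j)), and there exists a holomorphic function F on the half-plane {s : Re(s) > 1 − δ} such that for all s with Re(s) > max(0, max_j (1 − α_j)): H(s) = Σ_{j=0}^{N−1} Σ_{k=0}^{1} c_{j,k}/(s + α_j − 1)^{k+1} + c₀/s² + c₁/s + F(s). -/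
open MeasureTheory Set

noncomputable section

/-!
Subtract the expansion from `g`. The remainder is continuous and `O(r^{-δ})`, so its transform
`∫₁^∞ r^{-s} R(r) dr` is holomorphic for `Re s > 1 - δ`; this is `F`. It is obtained from Mathlib's
theory of the Mellin transform applied, at `1 - s`, to the extension of `R` by zero to `(0, 1]`
(`hasDerivAt_transform`).

The terms of the expansion are transformed explicitly, via
`∫₁^∞ r^{-w} log^k r dr = 1 / (w - 1)^{k+1}` for `Re w > 1` and `k = 0, 1` (`transform_log_pow`).
The case `k = 0` is the integral of a power; the case `k = 1` follows by differentiating in `w`.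
-/

/-- If `f` is continuous on `[1, ∞)` and `O(r^{-a})`, its transform `∫₁^∞ r^{-s} f(r) dr` converges
absolutely and may be differentiated under the integral sign when `Re s > 1 - a`. -/
lemma hasDerivAt_transform {f : ℝ → ℂ} (hf : ContinuousOn f (Ici (1 : ℝ))) {a C : ℝ}
    (hC : ∀ r : ℝ, 1 ≤ r → ‖f r‖ ≤ C * r ^ (-a)) {s : ℂ} (hs : 1 - a < s.re) :
    IntegrableOn (fun r : ℝ => Complex.exp (-s * (Real.log r : ℂ)) * f r) (Ioi (1 : ℝ)) ∧
    IntegrableOn (fun r : ℝ => Complex.exp (-s * (Real.log r : ℂ)) * ((Real.log r : ℂ) * f r))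
      (Ioi (1 : ℝ)) ∧
    HasDerivAt (fun z : ℂ => ∫ r in Ioi (1 : ℝ), Complex.exp (-z * (Real.log r : ℂ)) * f r)
      (-∫ r in Ioi (1 : ℝ), Complex.exp (-s * (Real.log r : ℂ)) * ((Real.log r : ℂ) * f r)) s := by
  have hsub : Ioi (1 : ℝ) ⊆ Ioi 0 := Ioi_subset_Ioi zero_le_one
  have key : ∀ (z : ℂ) (h : ℝ → ℂ),
      (Ioi (0 : ℝ)).indicator (fun t : ℝ => (t : ℂ) ^ (1 - z - 1) • (Ioi (1 : ℝ)).indicator h t)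
        = (Ioi (1 : ℝ)).indicator
          (fun r : ℝ => Complex.exp (-z * (Real.log r : ℂ)) * h r) := by
    intro z h
    ext t
    by_cases ht : t ∈ Ioi (1 : ℝ)
    · have ht0 : (0 : ℝ) < t := hsub ht
      rw [indicator_of_mem (hsub ht), indicator_of_mem ht, indicator_of_mem ht,
        Complex.cpow_def_of_ne_zero (by exact_mod_cast ht0.ne'), ← Complex.ofReal_log ht0.le,
        smul_eq_mul]
      congr 2
      ring
    · by_cases h0 : t ∈ Ioi (0 : ℝ) <;> simp [ht, h0]
  have hmel : ∀ (z : ℂ) (h : ℝ → ℂ), mellin ((Ioi (1 : ℝ)).indicator h) (1 - z)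
      = ∫ r in Ioi (1 : ℝ), Complex.exp (-z * (Real.log r : ℂ)) * h r := by
    intro z h
    rw [mellin, ← integral_indicator measurableSet_Ioi, key,
      integral_indicator measurableSet_Ioi]
  have hconv : ∀ (z : ℂ) (h : ℝ → ℂ), MellinConvergent ((Ioi (1 : ℝ)).indicator h) (1 - z) ↔
      IntegrableOn (fun r : ℝ => Complex.exp (-z * (Real.log r : ℂ)) * h r) (Ioi (1 : ℝ)) := by
    intro z h
    rw [MellinConvergent, ← integrable_indicator_iff measurableSet_Ioi, key,
      integrable_indicator_iff measurableSet_Ioi]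
  have hloc : LocallyIntegrableOn ((Ioi (1 : ℝ)).indicator f) (Ioi 0) := by
    -- `f` need not be continuous at `1` from the left, so integrability on compact sets is shown
    -- for the indicator of the closed half-line, which agrees almost everywhere.
    have h1 : LocallyIntegrable ((Ici (1 : ℝ)).indicator f) := by
      rw [locallyIntegrable_iff]
      intro K hK
      rw [IntegrableOn, integrable_indicator_iff measurableSet_Ici, IntegrableOn,
        Measure.restrict_restrict measurableSet_Ici]
      exact (hf.mono inter_subset_left).integrableOn_compact (hK.inter_left isClosed_Ici)
    have h2 := h1.locallyIntegrableOn (Ioi 0)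
    intro x hx
    obtain ⟨u, hu, hi⟩ := h2 x hx
    refine ⟨u, hu, hi.congr (ae_restrict_of_ae ?_)⟩
    exact (indicator_ae_eq_of_ae_eq_set Ioi_ae_eq_Ici).symm
  have htop : ((Ioi (1 : ℝ)).indicator f) =O[Filter.atTop] (fun t : ℝ => t ^ (-a)) := by
    refine Asymptotics.IsBigO.of_bound C ?_
    filter_upwards [Filter.eventually_gt_atTop 1] with t ht
    rw [indicator_of_mem (show t ∈ Ioi (1 : ℝ) from ht), Real.norm_of_nonneg
      (Real.rpow_nonneg (by linarith) _)]
    exact hC t ht.le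
  -- The extension by zero vanishes near `0`, so the exponent there may be any `b < 1 - Re s`.
  have hbot : ((Ioi (1 : ℝ)).indicator f) =O[nhdsWithin 0 (Ioi 0)]
      (fun t : ℝ => t ^ (-((1 - s).re - 1))) := by
    refine Asymptotics.IsBigO.of_bound 0 ?_
    filter_upwards [mem_nhdsWithin_of_mem_nhds (Iio_mem_nhds (zero_lt_one (α := ℝ)))] with t ht
    rw [indicator_of_notMem (fun h : t ∈ Ioi (1 : ℝ) => lt_asymm (mem_Ioi.1 h) (mem_Iio.1 ht))]
    simp
  have hconv0 := mellinConvergent_of_isBigO_rpow hloc htop (s := 1 - s) (by simp; linarith)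
    hbot (by linarith)
  obtain ⟨hc, hd⟩ := mellin_hasDerivAt_of_isBigO_rpow hloc htop (s := 1 - s) (by simp; linarith)
    hbot (by linarith)
  have hlog : (fun t : ℝ => Real.log t • (Ioi (1 : ℝ)).indicator f t)
      = (Ioi (1 : ℝ)).indicator (fun r : ℝ => (Real.log r : ℂ) * f r) := by
    ext t
    by_cases ht : t ∈ Ioi (1 : ℝ) <;> simp [ht]
  rw [hlog] at hc hd
  refine ⟨(hconv _ _).1 hconv0, (hconv _ _).1 hc, ?_⟩
  rw [hmel] at hd
  have h3 := HasDerivAt.comp s hd ((hasDerivAt_id s).const_sub 1)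
  simp only [mul_neg, mul_one] at h3
  refine h3.congr_of_eventuallyEq (Filter.Eventually.of_forall fun z => ?_)
  exact (hmel z f).symm

lemma transform_log_pow {w : ℂ} (hw : 1 < w.re) {k : ℕ} (hk : k < 2) :
    IntegrableOn (fun r : ℝ => Complex.exp (-w * (Real.log r : ℂ)) * (Real.log r : ℂ) ^ k)
      (Ioi (1 : ℝ)) ∧
    ∫ r in Ioi (1 : ℝ), Complex.exp (-w * (Real.log r : ℂ)) * (Real.log r : ℂ) ^ k
      = 1 / (w - 1) ^ (k + 1) := by
  have h0 : ∀ z : ℂ, 1 < z.re →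
      ∫ r in Ioi (1 : ℝ), Complex.exp (-z * (Real.log r : ℂ)) * 1 = (z - 1)⁻¹ := by
    -- The factor `1` matches the integrand of `hasDerivAt_transform` for `f = 1`.
    intro z hz
    have h := integral_Ioi_cpow_of_lt (a := -z) (by simpa using hz) (zero_lt_one (α := ℝ))
    have hz1 : z - 1 ≠ 0 := fun h => by
      rw [sub_eq_zero.1 h] at hz
      simp at hz
    have hz2 : -z + 1 ≠ 0 := fun h => hz1 (by linear_combination -h)
    rw [Complex.ofReal_one, Complex.one_cpow] at h
    rw [show (z - 1)⁻¹ = -1 / (-z + 1) by field_simp; ring, ← h]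
    refine setIntegral_congr_fun measurableSet_Ioi fun r hr => ?_
    have hr0 : (0 : ℝ) < r := zero_lt_one.trans hr
    rw [Complex.cpow_def_of_ne_zero (by exact_mod_cast hr0.ne'), ← Complex.ofReal_log hr0.le,
      mul_one, mul_comm]
  obtain ⟨hi0, hi1, hd⟩ := hasDerivAt_transform (f := fun _ => 1) continuousOn_const
    (a := 0) (C := 1) (by simp) (s := w) (by simpa using hw)
  interval_cases k
  · exact ⟨by simpa using hi0, by simpa using h0 w hw⟩
  · refine ⟨by simpa using hi1, ?_⟩
    have hw1 : w - 1 ≠ 0 := fun h => by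
      rw [sub_eq_zero.1 h] at hw
      simp at hw
    have hd' := ((hasDerivAt_id w).sub_const 1).inv hw1
    have hev : (fun z : ℂ => ∫ r in Ioi (1 : ℝ), Complex.exp (-z * (Real.log r : ℂ)) * 1)
        =ᶠ[nhds w] fun z => (z - 1)⁻¹ := by
      filter_upwards [(isOpen_lt continuous_const Complex.continuous_re).mem_nhds hw] with z hz
      exact h0 z hz
    have hu := (hd.congr_of_eventuallyEq hev.symm).unique hd'
    simp only [mul_one, id, neg_div, neg_inj] at hu
    simpa using hu

/-- The transform of a single term `b r^{-β} log^k r` of the expansion. -/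
lemma transform_rpow_log_pow {s : ℂ} {β : ℝ} (hs : 1 - β < s.re) {k : ℕ} (hk : k < 2) (b : ℂ) :
    IntegrableOn (fun r : ℝ => Complex.exp (-s * (Real.log r : ℂ)) *
      (b * ((r ^ (-β) : ℝ) : ℂ) * (Real.log r : ℂ) ^ k)) (Ioi (1 : ℝ)) ∧
    ∫ r in Ioi (1 : ℝ), Complex.exp (-s * (Real.log r : ℂ)) *
      (b * ((r ^ (-β) : ℝ) : ℂ) * (Real.log r : ℂ) ^ k) = b / (s + β - 1) ^ (k + 1) := by
  obtain ⟨hi, he⟩ := transform_log_pow (w := s + β) (by simp; linarith) hk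
  have hE : EqOn (fun r : ℝ => b * (Complex.exp (-(s + β) * (Real.log r : ℂ)) *
      (Real.log r : ℂ) ^ k)) (fun r : ℝ => Complex.exp (-s * (Real.log r : ℂ)) *
      (b * ((r ^ (-β) : ℝ) : ℂ) * (Real.log r : ℂ) ^ k)) (Ioi (1 : ℝ)) := by
    intro r hr
    have hr0 : (0 : ℝ) < r := zero_lt_one.trans hr
    simp only
    rw [Real.rpow_def_of_pos hr0, Complex.ofReal_exp,
      show -(s + β) * (Real.log r : ℂ) = -s * (Real.log r : ℂ) + ((Real.log r * -β : ℝ) : ℂ) by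
        push_cast; ring, Complex.exp_add]
    ring
  refine ⟨IntegrableOn.congr_fun (hi.const_mul b) hE measurableSet_Ioi, ?_⟩
  rw [← setIntegral_congr_fun measurableSet_Ioi hE, integral_const_mul, he, mul_one_div]

/-- Mellin-transform continuation lemma at infinity: if the continuous
function `g` on `[1,∞)` has an asymptotic expansion
`g(r) = Σ_{j<N} Σ_{k≤1} c_{j,k} r^{−α_j} log^k r + c₀ r^{−1} log r + c₁ r^{−1} + O(r^{−δ})`
with `δ > 1`, `δ > α_j`, `α_j ≠ 1`, then `H(s) = ∫₁^∞ r^{−s} g(r) dr` converges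
absolutely for `Re(s) > max(0, max_j (1−α_j))`, and there is a holomorphic `F` on
`{Re(s) > 1−δ}` with `H(s) = Σ_{j,k} c_{j,k}/(s+α_j−1)^{k+1} + c₀/s² + c₁/s + F(s)`
on that range. Here `r^w := exp(w log r)` with the real logarithm. -/
theorem statement2
    (g : ℝ → ℂ) (hg : ContinuousOn g (Set.Ici (1:ℝ)))
    (N : ℕ) (α : ℕ → ℝ) (δ : ℝ) (c : ℕ → ℕ → ℂ) (c₀ c₁ : ℂ) (C : ℝ)
    (hα : ∀ j, j + 1 < N → α j < α (j + 1))
    (hα1 : ∀ j < N, α j ≠ 1)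
    (hδ1 : 1 < δ) (hδα : ∀ j < N, α j < δ)
    (hbound : ∀ r : ℝ, 1 ≤ r →
      ‖g r - (∑ j ∈ Finset.range N, ∑ k ∈ Finset.range 2,
            c j k * ((r ^ (-(α j)) : ℝ) : ℂ) * ((Real.log r : ℝ) : ℂ) ^ k)
          - c₀ * ((r⁻¹ : ℝ) : ℂ) * ((Real.log r : ℝ) : ℂ)
          - c₁ * ((r⁻¹ : ℝ) : ℂ)‖ ≤ C * r ^ (-δ)) :
    (∀ s : ℂ, 0 < s.re → (∀ j < N, 1 - α j < s.re) →
        IntegrableOn (fun r : ℝ => Complex.exp (-s * (Real.log r : ℂ)) * g r)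
          (Set.Ioi (1:ℝ))) ∧
    ∃ F : ℂ → ℂ, DifferentiableOn ℂ F {s : ℂ | 1 - δ < s.re} ∧
      ∀ s : ℂ, 0 < s.re → (∀ j < N, 1 - α j < s.re) →
        (∫ r in Set.Ioi (1:ℝ), Complex.exp (-s * (Real.log r : ℂ)) * g r) =
          (∑ j ∈ Finset.range N, ∑ k ∈ Finset.range 2,
              c j k / (s + (α j : ℂ) - 1) ^ (k + 1))
            + c₀ / s ^ 2 + c₁ / s + F s := by
  set R : ℝ → ℂ := fun r => g r - (∑ j ∈ Finset.range N, ∑ k ∈ Finset.range 2,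
            c j k * ((r ^ (-(α j)) : ℝ) : ℂ) * ((Real.log r : ℝ) : ℂ) ^ k)
          - c₀ * ((r⁻¹ : ℝ) : ℂ) * ((Real.log r : ℝ) : ℂ)
          - c₁ * ((r⁻¹ : ℝ) : ℂ) with hR
  have hne : ∀ r ∈ Ici (1 : ℝ), r ≠ 0 := fun r hr => (zero_lt_one.trans_le hr).ne'
  have hlogc : ContinuousOn (fun r : ℝ => (Real.log r : ℂ)) (Ici (1 : ℝ)) :=
    Complex.continuous_ofReal.comp_continuousOn (continuousOn_id.log hne)
  have hinvc : ContinuousOn (fun r : ℝ => ((r⁻¹ : ℝ) : ℂ)) (Ici (1 : ℝ)) :=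
    Complex.continuous_ofReal.comp_continuousOn (continuousOn_id.inv₀ hne)
  have hpowc : ∀ β : ℝ, ContinuousOn (fun r : ℝ => ((r ^ (-β) : ℝ) : ℂ)) (Ici (1 : ℝ)) := fun β =>
    Complex.continuous_ofReal.comp_continuousOn
      (continuousOn_id.rpow_const fun r hr => Or.inl (hne r hr))
  have hRc : ContinuousOn R (Ici (1 : ℝ)) := by
    refine ((hg.sub ?_).sub ((continuousOn_const.mul hinvc).mul hlogc)).sub
      (continuousOn_const.mul hinvc)
    exact continuousOn_finsetSum _ fun j _ => continuousOn_finsetSum _ fun k _ =>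
      (continuousOn_const.mul (hpowc _)).mul (hlogc.pow k)
  have hT : ∀ s : ℂ, 1 - δ < s.re → _ := fun s hs => hasDerivAt_transform hRc hbound hs
  have main : ∀ s : ℂ, 0 < s.re → (∀ j < N, 1 - α j < s.re) →
      IntegrableOn (fun r : ℝ => Complex.exp (-s * (Real.log r : ℂ)) * g r) (Ioi (1 : ℝ)) ∧
      (∫ r in Ioi (1 : ℝ), Complex.exp (-s * (Real.log r : ℂ)) * g r) =
          (∑ j ∈ Finset.range N, ∑ k ∈ Finset.range 2,
              c j k / (s + (α j : ℂ) - 1) ^ (k + 1))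
            + c₀ / s ^ 2 + c₁ / s
            + ∫ r in Ioi (1 : ℝ), Complex.exp (-s * (Real.log r : ℂ)) * R r := by
    intro s hs hsα
    have hIR := (hT s (by linarith)).1
    have hjk : ∀ j ∈ Finset.range N, ∀ k ∈ Finset.range 2, _ := fun j hj k hk =>
      transform_rpow_log_pow (hsα j (Finset.mem_range.1 hj)) (Finset.mem_range.1 hk) (c j k)
    obtain ⟨hi0, he0⟩ := transform_rpow_log_pow (s := s) (β := 1) (by simpa using hs)
      one_lt_two c₀
    obtain ⟨hi1, he1⟩ := transform_rpow_log_pow (s := s) (β := 1) (by simpa using hs)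
      two_pos c₁
    simp only [Real.rpow_neg_one, pow_one, pow_zero, mul_one, zero_add, one_add_one_eq_two,
      Complex.ofReal_one, add_sub_cancel_right] at hi0 he0 hi1 he1
    have hSi := integrable_finsetSum (Finset.range N) fun j hj =>
      integrable_finsetSum (Finset.range 2) fun k hk => (hjk j hj k hk).1
    have hdec : (fun r : ℝ => Complex.exp (-s * (Real.log r : ℂ)) * g r) = fun r : ℝ =>
        (∑ j ∈ Finset.range N, ∑ k ∈ Finset.range 2, Complex.exp (-s * (Real.log r : ℂ)) *
          (c j k * ((r ^ (-(α j)) : ℝ) : ℂ) * (Real.log r : ℂ) ^ k))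
        + Complex.exp (-s * (Real.log r : ℂ)) * (c₀ * ((r⁻¹ : ℝ) : ℂ) * (Real.log r : ℂ))
        + Complex.exp (-s * (Real.log r : ℂ)) * (c₁ * ((r⁻¹ : ℝ) : ℂ))
        + Complex.exp (-s * (Real.log r : ℂ)) * R r := by
      ext r
      simp only [← Finset.mul_sum, hR]
      ring
    rw [hdec]
    refine ⟨((hSi.add hi0).add hi1).add hIR, ?_⟩
    refine (integral_add ((hSi.add hi0).add hi1) hIR).trans (congrArg₂ (· + ·)
      ((integral_add (hSi.add hi0) hi1).trans (congrArg₂ (· + ·)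
        ((integral_add hSi hi0).trans (congrArg₂ (· + ·) ?_ he0)) he1)) rfl)
    rw [integral_finsetSum _ fun j hj =>
      integrable_finsetSum (Finset.range 2) fun k hk => (hjk j hj k hk).1]
    refine Finset.sum_congr rfl fun j hj => ?_
    rw [integral_finsetSum _ fun k hk => (hjk j hj k hk).1]
    exact Finset.sum_congr rfl fun k hk => (hjk j hj k hk).2
  exact ⟨fun s hs hsα => (main s hs hsα).1, _,
    fun s hs => (hT s hs).2.2.differentiableAt.differentiableWithinAt,
    fun s hs hsα => (main s hs hsα).2⟩
end
end

section
/- Let g : (0,1] → ℂ be continuous, and suppose there are complex numbers b₀, …, b_{N−1} and a constant C such that |g(r) − Σ_{j=0}^{N−1} b_j r^j| ≤ C r^N for all r ∈ (0,1]. Then h(s) := ∫₀¹ r^{−s} g(r) dr converges absolutely for Re(s) < 1, and there exists a holomorphic function G on the half-plane {s : Re(s) < N+1} such that h(s) = Σ_{j=0}^{N−1} b_j/(j + 1 − s) + G(s) for all s with Re(s) < 1. -/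
/-! With `R = g − Σ b_j r^j` the remainder on `(0,1]`, extended by zero, one has
`h(s) = Σ b_j ∫₀¹ r^{j−s} dr + ∫₀¹ r^{−s} R(r) dr`. The monomial integrals are explicit
(`hasMellin_cpow_Ioc`). The last integral is the Mellin transform of `R` at `1 − s`; since
`R = O(r^N)` at `0` and `R` vanishes near infinity, it converges and is holomorphic for
`Re(1 − s) > −N` (`mellinConvergent_of_isBigO_rpow`, `mellin_differentiableAt_of_isBigO_rpow`). -/

open MeasureTheory Set

noncomputable section

open Filter Asymptotics Topology

/-- The integrand `r^{-s} F(r)` on `(0,1]` is, after extension by zero, the Mellin integrand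
of `F` at `1 - s`. -/
lemma mellin_integrand_indicator (F : ℝ → ℂ) (s : ℂ) (r : ℝ) :
    (r : ℂ) ^ (1 - s - 1) • (Ioc (0:ℝ) 1).indicator F r =
      (Ioc (0:ℝ) 1).indicator (fun r : ℝ => Complex.exp (-s * (Real.log r : ℂ)) * F r) r := by
  by_cases hr : r ∈ Ioc (0:ℝ) 1
  · rw [indicator_of_mem hr, indicator_of_mem hr, smul_eq_mul,
      Complex.cpow_def_of_ne_zero (Complex.ofReal_ne_zero.2 hr.1.ne'),
      ← Complex.ofReal_log hr.1.le]
    congr 2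
    ring
  · simp [indicator_of_notMem hr]

lemma mellinConvergent_indicator_iff (F : ℝ → ℂ) (s : ℂ) :
    MellinConvergent ((Ioc (0:ℝ) 1).indicator F) (1 - s) ↔
      IntegrableOn (fun r : ℝ => Complex.exp (-s * (Real.log r : ℂ)) * F r) (Ioc (0:ℝ) 1) := by
  simp_rw [MellinConvergent, mellin_integrand_indicator]
  rw [IntegrableOn, integrable_indicator_iff measurableSet_Ioc, IntegrableOn,
    Measure.restrict_restrict_of_subset Ioc_subset_Ioi_self]
  rfl

lemma mellin_indicator_eq (F : ℝ → ℂ) (s : ℂ) :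
    mellin ((Ioc (0:ℝ) 1).indicator F) (1 - s) =
      ∫ r in Ioc (0:ℝ) 1, Complex.exp (-s * (Real.log r : ℂ)) * F r := by
  simp_rw [mellin, mellin_integrand_indicator]
  rw [integral_indicator measurableSet_Ioc,
    Measure.restrict_restrict_of_subset Ioc_subset_Ioi_self]

lemma integrableOn_and_integral_monomial (j : ℕ) {s : ℂ} (hs : s.re < 1) :
    IntegrableOn (fun r : ℝ => Complex.exp (-s * (Real.log r : ℂ)) * (r : ℂ) ^ j)
        (Ioc (0:ℝ) 1) ∧
      (∫ r in Ioc (0:ℝ) 1, Complex.exp (-s * (Real.log r : ℂ)) * (r : ℂ) ^ j) =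
        1 / ((j : ℂ) + 1 - s) := by
  have h := hasMellin_cpow_Ioc (j : ℂ) (s := 1 - s) (by
    have : (0:ℝ) ≤ j := j.cast_nonneg
    simp only [Complex.sub_re, Complex.one_re, Complex.natCast_re]
    linarith)
  simp_rw [Complex.cpow_natCast] at h
  refine ⟨(mellinConvergent_indicator_iff _ s).1 h.1, ?_⟩
  rw [← mellin_indicator_eq, h.2]
  congr 1
  ring

/-- Mellin-transform continuation lemma at `0`: if the continuous
function `g` on `(0,1]` satisfies `|g(r) − Σ_{j<N} b_j r^j| ≤ C r^N`, then
`h(s) = ∫₀¹ r^{−s} g(r) dr` converges absolutely for `Re(s) < 1`, and there is a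
holomorphic `G` on `{Re(s) < N+1}` with `h(s) = Σ_{j<N} b_j/(j+1−s) + G(s)` for
`Re(s) < 1`. Here `r^w := exp(w log r)` with the real logarithm. -/
theorem statement3
    (g : ℝ → ℂ) (hg : ContinuousOn g (Set.Ioc (0:ℝ) 1))
    (N : ℕ) (b : ℕ → ℂ) (C : ℝ)
    (hbound : ∀ r ∈ Set.Ioc (0:ℝ) 1,
      ‖g r - ∑ j ∈ Finset.range N, b j * (r : ℂ) ^ j‖ ≤ C * r ^ N) :
    (∀ s : ℂ, s.re < 1 →
        IntegrableOn (fun r : ℝ => Complex.exp (-s * (Real.log r : ℂ)) * g r)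
          (Set.Ioc (0:ℝ) 1)) ∧
    ∃ G : ℂ → ℂ, DifferentiableOn ℂ G {s : ℂ | s.re < N + 1} ∧
      ∀ s : ℂ, s.re < 1 →
        (∫ r in Set.Ioc (0:ℝ) 1, Complex.exp (-s * (Real.log r : ℂ)) * g r) =
          (∑ j ∈ Finset.range N, b j / ((j : ℂ) + 1 - s)) + G s := by
  set p : ℝ → ℂ := fun r => ∑ j ∈ Finset.range N, b j * (r : ℂ) ^ j with hp
  set R : ℝ → ℂ := fun r => g r - p r with hR
  set f : ℝ → ℂ := (Ioc (0:ℝ) 1).indicator R with hf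
  have hpc : Continuous p := by fun_prop
  have hfint : Integrable f := by
    rw [hf, integrable_indicator_iff measurableSet_Ioc]
    refine IntegrableOn.of_bound (by simp)
      ((hg.sub hpc.continuousOn).aestronglyMeasurable measurableSet_Ioc) |C| ?_
    filter_upwards [ae_restrict_mem measurableSet_Ioc] with r hr
    refine (hbound r hr).trans ?_
    calc C * r ^ N ≤ |C| * r ^ N :=
          mul_le_mul_of_nonneg_right (le_abs_self C) (pow_nonneg hr.1.le N)
      _ ≤ |C| * 1 :=
          mul_le_mul_of_nonneg_left (pow_le_one₀ hr.1.le hr.2) (abs_nonneg C)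
      _ = |C| := mul_one _
  have hloc : LocallyIntegrableOn f (Ioi 0) :=
    hfint.locallyIntegrable.locallyIntegrableOn _
  have htop (a : ℝ) : f =O[atTop] (· ^ (-a) : ℝ → ℝ) := by
    refine EventuallyEq.trans_isBigO ?_ (isBigO_zero _ _)
    filter_upwards [eventually_gt_atTop (1:ℝ)] with r hr
    exact indicator_of_notMem (fun h => not_lt_of_ge h.2 hr) _
  have hbot : f =O[𝓝[>] 0] (· ^ (-(-(N:ℝ))) : ℝ → ℝ) := by
    refine IsBigO.of_bound C ?_
    filter_upwards [Ioc_mem_nhdsGT (zero_lt_one' ℝ)] with r hr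
    rw [hf, indicator_of_mem hr, neg_neg, Real.rpow_natCast,
      Real.norm_of_nonneg (pow_nonneg hr.1.le N)]
    exact hbound r hr
  have hRint {s : ℂ} (hs : s.re < 1) :
      IntegrableOn (fun r : ℝ => Complex.exp (-s * (Real.log r : ℂ)) * R r) (Ioc (0:ℝ) 1) := by
    refine (mellinConvergent_indicator_iff R s).1
      (mellinConvergent_of_isBigO_rpow hloc (htop _) (lt_add_one _) hbot ?_)
    have : (0:ℝ) ≤ N := N.cast_nonneg
    simp only [Complex.sub_re, Complex.one_re]
    linarith
  have hterm {s : ℂ} (hs : s.re < 1) (j : ℕ) :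
      IntegrableOn (fun r : ℝ => b j * (Complex.exp (-s * (Real.log r : ℂ)) * (r : ℂ) ^ j))
        (Ioc (0:ℝ) 1) :=
    (integrableOn_and_integral_monomial j hs).1.const_mul (b j)
  have hsum {s : ℂ} (hs : s.re < 1) :
      IntegrableOn (fun r : ℝ => ∑ j ∈ Finset.range N,
        b j * (Complex.exp (-s * (Real.log r : ℂ)) * (r : ℂ) ^ j)) (Ioc (0:ℝ) 1) :=
    integrable_finsetSum _ fun j _ => hterm hs j
  have hsplit (s : ℂ) : (fun r : ℝ => Complex.exp (-s * (Real.log r : ℂ)) * g r) =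
      fun r : ℝ => (∑ j ∈ Finset.range N,
        b j * (Complex.exp (-s * (Real.log r : ℂ)) * (r : ℂ) ^ j)) +
          Complex.exp (-s * (Real.log r : ℂ)) * R r := by
    funext r
    have : ∑ j ∈ Finset.range N, b j * (Complex.exp (-s * (Real.log r : ℂ)) * (r : ℂ) ^ j) =
        Complex.exp (-s * (Real.log r : ℂ)) * p r := by
      rw [hp, Finset.mul_sum]
      exact Finset.sum_congr rfl fun j _ => mul_left_comm _ _ _
    rw [this, hR]
    ring
  refine ⟨fun s hs => ?_, fun s => mellin f (1 - s), fun s hs => ?_, fun s hs => ?_⟩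
  · rw [hsplit s]
    exact (hsum hs).add (hRint hs)
  · have hd : DifferentiableAt ℂ (mellin f) (1 - s) := by
      refine mellin_differentiableAt_of_isBigO_rpow hloc (htop _) (lt_add_one _) hbot ?_
      have : s.re < N + 1 := hs
      simp only [Complex.sub_re, Complex.one_re]
      linarith
    exact (hd.comp s ((differentiableAt_const 1).sub differentiableAt_id)).differentiableWithinAt
  · rw [hsplit s, integral_add (hsum hs) (hRint hs), integral_finsetSum _ fun j _ => hterm hs j,
      ← mellin_indicator_eq R]
    congr 1
    refine Finset.sum_congr rfl fun j _ => ?_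
    rw [integral_const_mul, (integrableOn_and_integral_monomial j hs).2, mul_one_div]
end
end

section
/- Let ψ : [0,∞) → ℂ be continuous, and suppose there are constants C > 0, δ > 0 and complex numbers c₀, c₁ such that |ψ(r) − ψ(0)| ≤ C r for all 0 < r ≤ 1, and |ψ(r) − c₀ log r − c₁| ≤ C r^{−δ} for all r ≥ 1. Then g(s) := ∫₀^∞ r^{−s−1} (ψ(r) − ψ(0)) dr converges absolutely for 0 < Re(s) < 1, and there exists a holomorphic function h on the disc {s : |s| < min(1, δ)} such that s · g(s) = c₀/s + h(s) for all s with 0 < Re(s) < min(1, δ), and h(0) = c₁ − ψ(0). -/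
/-!
Up to the substitution `w = -s`, the integral `g(s)` is the Mellin transform of `ψ - ψ(0)`.
Let `L` be the indicator function of `(1, ∞)` and split
`ψ - ψ(0) = F + c₀ (log · L) + (c₁ - ψ(0)) L`.
The remainder `F` is `O(r)` at `0` and `O(r^{-δ})` at infinity, so its Mellin transform is
holomorphic for `-1 < Re w < δ`; this strip contains the disc `|w| < min(1, δ)`. For `Re w < 0` the
Mellin transform of `L` is `-1/w`, and that of `log · L` is its derivative `1/w²`. Hence
`s g(s) = s (mellin F (-s)) + c₀/s + (c₁ - ψ(0))` for `0 < Re s < 1`, and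
`h(s) = s (mellin F (-s)) + (c₁ - ψ(0))` is the required function.
-/

open MeasureTheory Set

noncomputable section

/-- The indicator function of `(1, ∞)`, with complex values. -/
def cutoff : ℝ → ℂ := (Ioi (1:ℝ)).indicator (fun _ => 1)

lemma cutoff_of_lt {r : ℝ} (hr : 1 < r) : cutoff r = 1 := by
  simp [cutoff, hr]

lemma cutoff_of_le {r : ℝ} (hr : r ≤ 1) : cutoff r = 0 := by
  simp [cutoff, hr]

lemma locallyIntegrable_cutoff : LocallyIntegrable cutoff :=
  (locallyIntegrable_const (1:ℂ)).indicator measurableSet_Ioi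

lemma cutoff_isBigO_atTop : cutoff =O[Filter.atTop] (fun r : ℝ => r ^ (-(0:ℝ))) := by
  refine Asymptotics.IsBigO.of_bound 1 ?_
  filter_upwards [Filter.eventually_gt_atTop 1] with r hr
  simp [cutoff_of_lt hr]

lemma cutoff_isBigO_zero (b : ℝ) :
    cutoff =O[nhdsWithin 0 (Ioi 0)] (fun r : ℝ => r ^ (-b)) := by
  refine Asymptotics.IsBigO.of_bound 1 ?_
  filter_upwards [Ioo_mem_nhdsGT (zero_lt_one (α := ℝ))] with r hr
  rw [cutoff_of_le hr.2.le, norm_zero]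
  positivity

lemma hasMellin_cutoff {w : ℂ} (hw : w.re < 0) : HasMellin cutoff w (-w⁻¹) := by
  refine ⟨mellinConvergent_of_isBigO_rpow (locallyIntegrable_cutoff.locallyIntegrableOn _)
    cutoff_isBigO_atTop hw (cutoff_isBigO_zero (w.re - 1)) (by linarith), ?_⟩
  have h : (fun t : ℝ => (t : ℂ) ^ (w - 1) • cutoff t) =
      (Ioi (1:ℝ)).indicator (fun t : ℝ => (t : ℂ) ^ (w - 1)) := by
    ext t
    by_cases ht : 1 < t
    · simp [cutoff_of_lt ht, ht]
    · simp [cutoff_of_le (not_lt.mp ht), ht]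
  rw [mellin, h, setIntegral_indicator measurableSet_Ioi,
    inter_eq_self_of_subset_right (Ioi_subset_Ioi zero_le_one),
    integral_Ioi_cpow_of_lt (by simp; linarith) zero_lt_one]
  simp [neg_div]

lemma hasMellin_log_cutoff {w : ℂ} (hw : w.re < 0) :
    HasMellin (fun t => Real.log t • cutoff t) w (w ^ 2)⁻¹ := by
  have key := mellin_hasDerivAt_of_isBigO_rpow (locallyIntegrable_cutoff.locallyIntegrableOn _)
    cutoff_isBigO_atTop hw (cutoff_isBigO_zero (w.re - 1)) (by linarith)
  refine ⟨key.1, key.2.unique ?_⟩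
  have hw0 : w ≠ 0 := by
    rintro rfl
    simp at hw
  have hd : HasDerivAt (fun z : ℂ => -z⁻¹) (w ^ 2)⁻¹ w := by
    have := (hasDerivAt_inv hw0).neg
    rwa [neg_neg] at this
  refine hd.congr_of_eventuallyEq ?_
  filter_upwards [(isOpen_lt Complex.continuous_re continuous_const).mem_nhds hw] with z hz
  exact (hasMellin_cutoff hz).2

/-- The part of `ψ - ψ(0)` left after removing its asymptotics `c₀ log r + c₁ - ψ(0)` on
`(1, ∞)`. -/
def remainder (ψ : ℝ → ℂ) (c₀ c₁ : ℂ) (r : ℝ) : ℂ :=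
  ψ r - ψ 0 - (c₀ • (Real.log r • cutoff r) + (c₁ - ψ 0) • cutoff r)

lemma locallyIntegrableOn_remainder {ψ : ℝ → ℂ} (hψ : ContinuousOn ψ (Ici 0)) (c₀ c₁ : ℂ) :
    LocallyIntegrableOn (remainder ψ c₀ c₁) (Ioi 0) := by
  have hL := locallyIntegrable_cutoff.locallyIntegrableOn (Ioi (0:ℝ))
  have hlog : LocallyIntegrableOn (fun r : ℝ => Real.log r • cutoff r) (Ioi 0) :=
    hL.continuousOn_smul isOpen_Ioi.isLocallyClosed
      (Real.continuousOn_log.mono fun r hr => (ne_of_gt hr : r ≠ 0))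
  have hf : LocallyIntegrableOn (fun r => ψ r - ψ 0) (Ioi (0:ℝ)) :=
    ((hψ.mono Ioi_subset_Ici_self).sub continuousOn_const).locallyIntegrableOn measurableSet_Ioi
  exact hf.sub ((hlog.smul c₀).add (hL.smul (c₁ - ψ 0)))

lemma remainder_isBigO_atTop {ψ : ℝ → ℂ} {C δ : ℝ} {c₀ c₁ : ℂ}
    (h2 : ∀ r : ℝ, 1 ≤ r → ‖ψ r - c₀ * (Real.log r : ℂ) - c₁‖ ≤ C * r ^ (-δ)) :
    remainder ψ c₀ c₁ =O[Filter.atTop] (fun r : ℝ => r ^ (-δ)) := by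
  refine Asymptotics.IsBigO.of_bound C ?_
  filter_upwards [Filter.eventually_gt_atTop 1] with r hr
  rw [Real.norm_of_nonneg (by positivity : (0:ℝ) ≤ r ^ (-δ))]
  convert h2 r hr.le using 2
  simp only [remainder, cutoff_of_lt hr, smul_eq_mul, Complex.real_smul]
  ring

lemma remainder_isBigO_zero {ψ : ℝ → ℂ} {C : ℝ} (c₀ c₁ : ℂ)
    (h1 : ∀ r : ℝ, 0 < r → r ≤ 1 → ‖ψ r - ψ 0‖ ≤ C * r) :
    remainder ψ c₀ c₁ =O[nhdsWithin 0 (Ioi 0)] (fun r : ℝ => r ^ (-(-1:ℝ))) := by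
  refine Asymptotics.IsBigO.of_bound C ?_
  filter_upwards [Ioo_mem_nhdsGT (zero_lt_one (α := ℝ))] with r hr
  have := h1 r hr.1 hr.2.le
  simpa [remainder, cutoff_of_le hr.2.le, abs_of_pos hr.1] using this

/-- The integrand of the theorem is that of the Mellin transform at `-s`. -/
lemma exp_mul_log_eq_cpow (s : ℂ) {r : ℝ} (hr : 0 < r) :
    Complex.exp ((-s - 1) * (Real.log r : ℂ)) = (r : ℂ) ^ (-s - 1) := by
  rw [Complex.cpow_def_of_ne_zero (by exact_mod_cast hr.ne'), Complex.ofReal_log hr.le, mul_comm]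

/-- Scalar analytic core of the relativity principle for determinants:
if `ψ` is continuous on `[0,∞)` with `|ψ(r) − ψ(0)| ≤ C r` for `0 < r ≤ 1` and
`|ψ(r) − c₀ log r − c₁| ≤ C r^{−δ}` for `r ≥ 1`, then
`g(s) = ∫₀^∞ r^{−s−1}(ψ(r) − ψ(0)) dr` converges absolutely for `0 < Re(s) < 1`, and
there is a holomorphic `h` on the disc `{|s| < min(1,δ)}` with `s·g(s) = c₀/s + h(s)`
for `0 < Re(s) < min(1,δ)` and `h(0) = c₁ − ψ(0)`.
Here `r^w := exp(w log r)` with the real logarithm. -/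
theorem statement4
    (ψ : ℝ → ℂ) (hψ : ContinuousOn ψ (Set.Ici (0:ℝ)))
    (C δ : ℝ) (hC : 0 < C) (hδ : 0 < δ) (c₀ c₁ : ℂ)
    (h1 : ∀ r : ℝ, 0 < r → r ≤ 1 → ‖ψ r - ψ 0‖ ≤ C * r)
    (h2 : ∀ r : ℝ, 1 ≤ r → ‖ψ r - c₀ * (Real.log r : ℂ) - c₁‖ ≤ C * r ^ (-δ)) :
    (∀ s : ℂ, 0 < s.re → s.re < 1 →
        IntegrableOn
          (fun r : ℝ => Complex.exp ((-s - 1) * (Real.log r : ℂ)) * (ψ r - ψ 0))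
          (Set.Ioi (0:ℝ))) ∧
    ∃ h : ℂ → ℂ,
      DifferentiableOn ℂ h (Metric.ball (0:ℂ) (min 1 δ)) ∧
      (∀ s : ℂ, 0 < s.re → s.re < min 1 δ →
        s * (∫ r in Set.Ioi (0:ℝ),
            Complex.exp ((-s - 1) * (Real.log r : ℂ)) * (ψ r - ψ 0)) =
          c₀ / s + h s) ∧
      h 0 = c₁ - ψ 0 := by
  have hFc := locallyIntegrableOn_remainder hψ c₀ c₁
  have hFtop := remainder_isBigO_atTop h2
  have hFbot := remainder_isBigO_zero c₀ c₁ h1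
  have hM : ∀ s : ℂ, 0 < s.re → s.re < 1 → HasMellin (fun r => ψ r - ψ 0) (-s)
      (mellin (remainder ψ c₀ c₁) (-s) + (c₀ / s ^ 2 + (c₁ - ψ 0) / s)) := by
    intro s hs0 hs1
    have hF : MellinConvergent (remainder ψ c₀ c₁) (-s) :=
      mellinConvergent_of_isBigO_rpow hFc hFtop (by simp; linarith) hFbot (by simpa using hs1)
    have hneg : (-s).re < 0 := by simpa using hs0
    have hL := hasMellin_cutoff hneg
    have hlog := hasMellin_log_cutoff hneg
    have hLc := hasMellin_const_smul hL.1 (c₁ - ψ 0)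
    have hlogc := hasMellin_const_smul hlog.1 c₀
    have hadd := hasMellin_add hlogc.1 hLc.1
    have htot := hasMellin_add hF hadd.1
    rw [hadd.2, hlogc.2, hLc.2, hL.2, hlog.2] at htot
    convert htot using 1
    · ext r
      simp [remainder]
    · simp [div_eq_mul_inv]
  refine ⟨fun s hs0 hs1 => ?_, fun s => s * mellin (remainder ψ c₀ c₁) (-s) + (c₁ - ψ 0),
    fun s hs => ?_, fun s hs0 hs1 => ?_, by simp⟩
  · refine (integrableOn_congr_fun (fun r hr => ?_) measurableSet_Ioi).mp (hM s hs0 hs1).1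
    rw [exp_mul_log_eq_cpow s hr, smul_eq_mul]
  · have hs' : |s.re| < min 1 δ :=
      (Complex.abs_re_le_norm s).trans_lt (mem_ball_zero_iff.mp hs)
    obtain ⟨hlo, hhi⟩ := abs_lt.mp hs'
    have hd : DifferentiableAt ℂ (mellin (remainder ψ c₀ c₁)) (-s) :=
      mellin_differentiableAt_of_isBigO_rpow hFc hFtop
        (by rw [Complex.neg_re]; linarith [min_le_right 1 δ]) hFbot
        (by rw [Complex.neg_re]; linarith [min_le_left 1 δ])
    have hd' : DifferentiableAt ℂ (fun z => mellin (remainder ψ c₀ c₁) (-z)) s :=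
      hd.comp s differentiableAt_id.neg
    exact ((differentiableAt_id.mul hd').add_const _).differentiableWithinAt
  · have hint : (∫ r in Set.Ioi (0:ℝ),
        Complex.exp ((-s - 1) * (Real.log r : ℂ)) * (ψ r - ψ 0)) =
          mellin (fun r => ψ r - ψ 0) (-s) := by
      refine setIntegral_congr_fun measurableSet_Ioi fun r hr => ?_
      simp only [exp_mul_log_eq_cpow s hr, smul_eq_mul]
    have hs : s ≠ 0 := by
      rintro rfl
      simp at hs0
    rw [hint, (hM s hs0 (hs1.trans_le (min_le_left _ _))).2]
    field_simp
    ring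
end
end

section
/- Let T₁, T₂ : E → E⊥ be bounded linear operators such that 1_E + T₁*T₂ is an invertible operator on E. Then the restriction of the orthogonal projection P_{W_{T₁}} to the graph W_{T₂} is a bijection from W_{T₂} onto W_{T₁}. -/
/-! Write `w_T(ξ) = ξ + Tξ`, `A = 1 + T₁*T₂` and `Q = 1 + T₁*T₁`. Since `E ⊥ Eᗮ`, the difference
`w_{T₂}(η) - w_{T₁}(ξ)` pairs with `w_{T₁}(ζ)` to `⟪ζ, A η - Q ξ⟫`, so the projection of
`w_{T₂}(η)` onto `W_{T₁}` is `w_{T₁}(ξ)` exactly when `A η = Q ξ`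
(`graphVec_sub_mem_orthogonal_iff`). Injectivity of the projection on `W_{T₂}` then follows from
injectivity of `A`, and surjectivity onto `W_{T₁}` by taking `η = A⁻¹ Q ξ`. The projection exists
because `W_{T₁}` is closed: `‖ξ‖ ≤ ‖ξ + T₁ξ‖` (`isClosed_graphSub`). -/

noncomputable section

variable {H : Type*} [NormedAddCommGroup H] [InnerProductSpace ℂ H]

/-- The graph `W_T = {ξ + Tξ : ξ ∈ E}` of a bounded operator `T : E → Eᗮ`, as a
subspace of `H`. -/
def graphSub (E : Submodule ℂ H) (T : E →L[ℂ] Eᗮ) : Submodule ℂ H :=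
  LinearMap.range (E.subtype + Eᗮ.subtype.comp T.toLinearMap)

lemma mem_graphSub_iff (E : Submodule ℂ H) (T : E →L[ℂ] Eᗮ) (v : H) :
    v ∈ graphSub E T ↔ ∃ ξ : E, (ξ : H) + (T ξ : H) = v := by
  simp [graphSub]

lemma inner_graphVec (E : Submodule ℂ H) (a b : E) (c d : Eᗮ) :
    inner ℂ ((a : H) + c) ((b : H) + d) = inner ℂ a b + inner ℂ c d := by
  have h1 : inner ℂ (a : H) (d : H) = 0 := Submodule.inner_right_of_mem_orthogonal a.2 d.2
  have h2 : inner ℂ (c : H) (b : H) = 0 := Submodule.inner_left_of_mem_orthogonal b.2 c.2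
  rw [inner_add_left, inner_add_right, inner_add_right]
  simp [h1, h2]

/-- The vector `ξ + T₁ξ` of `W_{T₁}` is the orthogonal projection of `η + T₂η` exactly when
`(1 + T₁*T₂) η = (1 + T₁*T₁) ξ`. -/
lemma graphVec_sub_mem_orthogonal_iff (E : Submodule ℂ H) [CompleteSpace E] [CompleteSpace ↥Eᗮ]
    (T₁ T₂ : E →L[ℂ] Eᗮ) (η ξ : E) :
    ((η : H) + (T₂ η : H)) - ((ξ : H) + (T₁ ξ : H)) ∈ (graphSub E T₁)ᗮ ↔
      ((1 : E →L[ℂ] E) + (ContinuousLinearMap.adjoint T₁).comp T₂) η =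
        ((1 : E →L[ℂ] E) + (ContinuousLinearMap.adjoint T₁).comp T₁) ξ := by
  have key : ∀ ζ : E, inner ℂ ((ζ : H) + (T₁ ζ : H))
      (((η : H) + (T₂ η : H)) - ((ξ : H) + (T₁ ξ : H))) =
      inner ℂ ζ (((1 : E →L[ℂ] E) + (ContinuousLinearMap.adjoint T₁).comp T₂) η -
        ((1 : E →L[ℂ] E) + (ContinuousLinearMap.adjoint T₁).comp T₁) ξ) := by
    intro ζ
    rw [inner_sub_right, inner_graphVec, inner_graphVec, inner_sub_right]
    simp only [add_apply, one_apply_eq_self,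
      ContinuousLinearMap.comp_apply, inner_add_right, ContinuousLinearMap.adjoint_inner_right]
  rw [Submodule.mem_orthogonal, ← sub_eq_zero]
  constructor
  · intro h
    refine ext_inner_left ℂ fun ζ => ?_
    rw [← key, inner_zero_right]
    exact h _ ((mem_graphSub_iff E T₁ _).2 ⟨ζ, rfl⟩)
  · rintro h u hu
    obtain ⟨ζ, rfl⟩ := (mem_graphSub_iff E T₁ u).1 hu
    rw [key, h, inner_zero_right]

lemma isClosed_graphSub (E : Submodule ℂ H) [CompleteSpace E] (T : E →L[ℂ] Eᗮ) :
    IsClosed (graphSub E T : Set H) := by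
  let f : E →L[ℂ] H := E.subtypeL + Eᗮ.subtypeL.comp T
  have hf : AntilipschitzWith 1 f := by
    refine f.antilipschitz_of_bound fun ξ => ?_
    have h : inner ℂ (ξ : H) (T ξ : H) = 0 :=
      Submodule.inner_right_of_mem_orthogonal ξ.2 (T ξ).2
    have h2 := norm_add_sq_eq_norm_sq_add_norm_sq_of_inner_eq_zero (ξ : H) (T ξ : H) h
    have h3 : ‖(ξ : H)‖ ≤ ‖(ξ : H) + (T ξ : H)‖ := by
      nlinarith [norm_nonneg ((ξ : H) + (T ξ : H)), norm_nonneg (ξ : H), norm_nonneg (T ξ : H)]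
    simpa [f] using h3
  have hr : (graphSub E T : Set H) = Set.range f := by
    ext v
    simp [mem_graphSub_iff, f]
  rw [hr]
  exact hf.isClosed_range f.uniformContinuous

/-- If `1 + T₁*T₂` is invertible on `E`, then the restriction of the
orthogonal projection `P_{W_{T₁}}` (characterized by `P v ∈ W_{T₁}` and
`v − P v ⊥ W_{T₁}` for all `v`) to the graph `W_{T₂}` is a bijection from `W_{T₂}`
onto `W_{T₁}`. -/
theorem statement8 [CompleteSpace H] (E : Submodule ℂ H)
    (hE : IsClosed (E : Set H)) [CompleteSpace E] [CompleteSpace ↥Eᗮ]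
    (T₁ T₂ : E →L[ℂ] Eᗮ)
    (hinv : IsUnit ((1 : E →L[ℂ] E) + (ContinuousLinearMap.adjoint T₁).comp T₂)) :
    ∃ P : H → H,
      (∀ v : H, P v ∈ graphSub E T₁ ∧ v - P v ∈ (graphSub E T₁)ᗮ) ∧
      Set.BijOn P (graphSub E T₂ : Set H) (graphSub E T₁ : Set H) := by
  have hcl : IsClosed (graphSub E T₁ : Set H) := isClosed_graphSub E T₁
  have : CompleteSpace (graphSub E T₁) := hcl.completeSpace_coe
  have hA := (ContinuousLinearMap.isUnit_iff_bijective).1 hinv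
  have hP : ∀ v : H, (graphSub E T₁).starProjection v ∈ graphSub E T₁ ∧
      v - (graphSub E T₁).starProjection v ∈ (graphSub E T₁)ᗮ := fun v =>
    ⟨Submodule.starProjection_apply_mem _ v, Submodule.sub_starProjection_mem_orthogonal v⟩
  refine ⟨fun v => (graphSub E T₁).starProjection v, hP, fun v _ => (hP v).1, ?_, ?_⟩
  · intro v hv w hw hvw
    dsimp only at hvw
    obtain ⟨η, rfl⟩ := (mem_graphSub_iff E T₂ v).1 hv
    obtain ⟨η', rfl⟩ := (mem_graphSub_iff E T₂ w).1 hw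
    have h1 := hP ((η : H) + (T₂ η : H))
    have h2 := (hP ((η' : H) + (T₂ η' : H))).2
    obtain ⟨ξ, hξ⟩ := (mem_graphSub_iff E T₁ _).1 h1.1
    have h3 := h1.2
    rw [← hvw] at h2
    simp only [← hξ] at h2 h3
    rw [graphVec_sub_mem_orthogonal_iff] at h2 h3
    rw [hA.1 (h3.trans h2.symm)]
  · intro v hv
    obtain ⟨ξ, rfl⟩ := (mem_graphSub_iff E T₁ v).1 hv
    obtain ⟨η, hη⟩ := hA.2 (((1 : E →L[ℂ] E) + (ContinuousLinearMap.adjoint T₁).comp T₁) ξ)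
    refine ⟨(η : H) + (T₂ η : H), (mem_graphSub_iff E T₂ _).2 ⟨η, rfl⟩, ?_⟩
    exact Submodule.eq_starProjection_of_mem_orthogonal hv
      ((graphVec_sub_mem_orthogonal_iff E T₁ T₂ η ξ).2 hη)
end
end

section
/- Fix λ ∈ ℂ, let K be a parallel transport for D − λ, and let L : [0,β] → Matrix (Fin n) (Fin n) ℂ be differentiable with A(x) L′(x) + (B(x) − λ·I) L(x) = K(x) for all x ∈ [0,β]. Then for every x ∈ [0,β], the map x ↦ K(x)⁻¹ L(x) is differentiable with derivative K(x)⁻¹ A(x)⁻¹ K(x). -/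
/-!
The product rule and `(K⁻¹)' = -K⁻¹ K' K⁻¹` give `(K⁻¹ L)' = K⁻¹ (L' - K' K⁻¹ L)`.
With `C = B - λI`, the two differential equations say `K' K⁻¹ = -A⁻¹ C` and
`L' = A⁻¹ (K - C L)`, so the terms involving `C` cancel and `K⁻¹ A⁻¹ K` remains.

The calculus is carried out in the Banach algebra of matrices with the `ℓ^∞` operator norm,
whose topology is the entrywise one; `hasDerivWithinAt_inv_mul` contains this step.
-/

open Set

noncomputable section

open scoped Matrix.Norms.Operator in
/-- Matrix quotient rule, with derivatives taken entrywise. Invertibility of `K` is needed only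
at the base point, because inversion is differentiable at every unit of a Banach algebra. -/
theorem hasDerivWithinAt_inv_mul {n : ℕ} {s : Set ℝ} {x : ℝ}
    {K L : ℝ → Matrix (Fin n) (Fin n) ℂ} {K' L' : Matrix (Fin n) (Fin n) ℂ}
    (hK : ∀ i j, HasDerivWithinAt (fun t => K t i j) (K' i j) s x)
    (hL : ∀ i j, HasDerivWithinAt (fun t => L t i j) (L' i j) s x)
    (hu : IsUnit (K x)) (i j : Fin n) :
    HasDerivWithinAt (fun t => ((K t)⁻¹ * L t) i j)
      (((K x)⁻¹ * (L' - K' * (K x)⁻¹ * L x)) i j) s x := by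
  have hK' : HasDerivWithinAt K K' s x :=
    hasDerivWithinAt_pi.2 fun i => hasDerivWithinAt_pi.2 fun j => hK i j
  have hL' : HasDerivWithinAt L L' s x :=
    hasDerivWithinAt_pi.2 fun i => hasDerivWithinAt_pi.2 fun j => hL i j
  have hinv : HasDerivWithinAt (fun t => (K t)⁻¹) (-((K x)⁻¹ * K' * (K x)⁻¹)) s x := by
    obtain ⟨u, hu⟩ := hu
    have h := hasFDerivAt_ringInverse (𝕜 := ℝ) u
    rw [hu] at h
    have h2 := h.comp_hasDerivWithinAt x hK'
    have hux : (↑u⁻¹ : Matrix (Fin n) (Fin n) ℂ) = (K x)⁻¹ := by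
      rw [← hu, Matrix.coe_units_inv]
    simp only [Function.comp_def, ← Matrix.nonsing_inv_eq_ringInverse] at h2
    simp [hux] at h2
    -- The normed and the entrywise topology on matrices agree only after unfolding.
    exact h2
  have h := hinv.mul hL'
  have hval : -((K x)⁻¹ * K' * (K x)⁻¹) * L x + (K x)⁻¹ * L'
      = (K x)⁻¹ * (L' - K' * (K x)⁻¹ * L x) := by noncomm_ring
  rw [hval] at h
  exact hasDerivWithinAt_pi.1 (hasDerivWithinAt_pi.1 h i) j

/-- If `K` is a parallel transport for `D − λ` (i.e. `K(0) = I`,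
`A K′ + (B − λI) K = 0`, `K(x)` invertible) and `L` solves `A L′ + (B − λI) L = K`
on `[0,β]`, then `x ↦ K(x)⁻¹ L(x)` is differentiable on `[0,β]` with derivative
`K(x)⁻¹ A(x)⁻¹ K(x)` (derivatives of matrix-valued functions are taken entrywise,
within `[0,β]`). -/
theorem statement9
    (β : ℝ) (hβ : 0 < β) (n : ℕ) (hn : 1 ≤ n)
    (A B : ℝ → Matrix (Fin n) (Fin n) ℂ)
    (hA : ∀ i j, ContinuousOn (fun x => A x i j) (Icc (0:ℝ) β))
    (hB : ∀ i j, ContinuousOn (fun x => B x i j) (Icc (0:ℝ) β))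
    (hAinv : ∀ x ∈ Icc (0:ℝ) β, IsUnit (A x))
    (lam : ℂ)
    (K K' : ℝ → Matrix (Fin n) (Fin n) ℂ)
    (hK0 : K 0 = 1)
    (hKd : ∀ x ∈ Icc (0:ℝ) β, ∀ i j,
      HasDerivWithinAt (fun t => K t i j) (K' x i j) (Icc (0:ℝ) β) x)
    (hKeq : ∀ x ∈ Icc (0:ℝ) β,
      A x * K' x + (B x - lam • (1 : Matrix (Fin n) (Fin n) ℂ)) * K x = 0)
    (hKinv : ∀ x ∈ Icc (0:ℝ) β, IsUnit (K x))
    (L L' : ℝ → Matrix (Fin n) (Fin n) ℂ)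
    (hLd : ∀ x ∈ Icc (0:ℝ) β, ∀ i j,
      HasDerivWithinAt (fun t => L t i j) (L' x i j) (Icc (0:ℝ) β) x)
    (hLeq : ∀ x ∈ Icc (0:ℝ) β,
      A x * L' x + (B x - lam • (1 : Matrix (Fin n) (Fin n) ℂ)) * L x = K x) :
    ∀ x ∈ Icc (0:ℝ) β, ∀ i j,
      HasDerivWithinAt (fun t => ((K t)⁻¹ * L t) i j)
        (((K x)⁻¹ * (A x)⁻¹ * K x) i j) (Icc (0:ℝ) β) x := by
  intro x hx i j
  have hq := hasDerivWithinAt_inv_mul (hKd x hx) (hLd x hx) (hKinv x hx) i j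
  have hAd := (Matrix.isUnit_iff_isUnit_det _).1 (hAinv x hx)
  have hKdet := (Matrix.isUnit_iff_isUnit_det _).1 (hKinv x hx)
  have hcancel : A x * (L' x - K' x * (K x)⁻¹ * L x) = K x := by
    have hAK := eq_neg_of_add_eq_zero_left (hKeq x hx)
    calc A x * (L' x - K' x * (K x)⁻¹ * L x)
        = A x * L' x - A x * K' x * (K x)⁻¹ * L x := by noncomm_ring
      _ = A x * L' x + (B x - lam • (1 : Matrix (Fin n) (Fin n) ℂ)) * L x := by
          rw [hAK, neg_mul, neg_mul, sub_neg_eq_add,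
            Matrix.mul_nonsing_inv_cancel_right _ _ hKdet]
      _ = K x := hLeq x hx
  have hval : L' x - K' x * (K x)⁻¹ * L x = (A x)⁻¹ * K x := by
    rw [← Matrix.nonsing_inv_mul_cancel_left _ (L' x - K' x * (K x)⁻¹ * L x) hAd, hcancel]
  rwa [hval, ← mul_assoc] at hq
end
end

section
/- Let K be a parallel transport for D (the case λ = 0) and suppose M_β := M + N K(β) is an invertible matrix. Define the Green's kernel k(x,y) := −K(x) M_β⁻¹ N K(β) K(y)⁻¹ A(y)⁻¹ for 0 ≤ x < y ≤ β, and k(x,y) := K(x) (I − M_β⁻¹ N K(β)) K(y)⁻¹ A(y)⁻¹ for 0 ≤ y < x ≤ β. Then for every continuous f : [0,β] → ℂⁿ, the function ψ(x) := ∫₀^β k(x,y) f(y) dy is continuously differentiable on [0,β] and satisfies A(x) ψ′(x) + B(x) ψ(x) = f(x) for all x ∈ [0,β], together with the boundary condition M ψ(0) + N ψ(β) = 0. -/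
/-!
Variation of constants. Put `G(y) = K(y)⁻¹ A(y)⁻¹ f(y)`, `F(x) = ∫₀ˣ G` and
`P = M_β⁻¹ N K(β)`. Both branches of the kernel are covered by
`k(x,y) f(y) = K(x) (1_{y ≤ x} G(y) - P G(y))`, so that `ψ(x) = K(x) (F(x) - P F(β))`
(`greenSol_eq`). The product rule and the fundamental theorem of calculus then give
`ψ' = K' (F - P F(β)) + A⁻¹ f`, and `A K' + B K = 0` turns this into `A ψ' + B ψ = f`.
The boundary condition reduces to `N K(β) = (M + N K(β)) P`.
-/

open Set MeasureTheory

noncomputable section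

/-- The Green's kernel of the boundary value problem `(D_P, M, N)` built from the
parallel transport `K` of `D`: `k(x,y) = −K(x) M_β⁻¹ N K(β) K(y)⁻¹ A(y)⁻¹` for
`x < y` and `k(x,y) = K(x)(I − M_β⁻¹ N K(β)) K(y)⁻¹ A(y)⁻¹` for `y < x`,
where `M_β = M + N K(β)`. -/
def greenKernel (n : ℕ) (A K : ℝ → Matrix (Fin n) (Fin n) ℂ)
    (M N : Matrix (Fin n) (Fin n) ℂ) (β : ℝ) (x y : ℝ) : Matrix (Fin n) (Fin n) ℂ :=
  if x < y then -(K x * (M + N * K β)⁻¹ * N * K β * (K y)⁻¹ * (A y)⁻¹)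
  else K x * (1 - (M + N * K β)⁻¹ * N * K β) * (K y)⁻¹ * (A y)⁻¹

/-- `ψ(x) = ∫₀^β k(x,y) f(y) dy`. -/
def greenSol (n : ℕ) (A K : ℝ → Matrix (Fin n) (Fin n) ℂ)
    (M N : Matrix (Fin n) (Fin n) ℂ) (β : ℝ) (f : ℝ → Fin n → ℂ) (x : ℝ) :
    Fin n → ℂ :=
  ∫ y in Icc (0:ℝ) β, Matrix.mulVec (greenKernel n A K M N β x y) (f y)

theorem continuousOn_matrix_inv {n : ℕ} {A : ℝ → Matrix (Fin n) (Fin n) ℂ} {s : Set ℝ}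
    (hA : ContinuousOn A s) (hu : ∀ x ∈ s, IsUnit (A x)) :
    ContinuousOn (fun x => (A x)⁻¹) s := by
  have hdet : ContinuousOn (fun x => (A x).det) s :=
    (Continuous.matrix_det continuous_id).comp_continuousOn hA
  have hadj : ContinuousOn (fun x => (A x).adjugate) s :=
    (Continuous.matrix_adjugate continuous_id).comp_continuousOn hA
  have h0 : ∀ x ∈ s, (A x).det ≠ 0 := fun x hx =>
    ((Matrix.isUnit_iff_isUnit_det _).1 (hu x hx)).ne_zero
  simp only [Matrix.inv_def, Ring.inverse_eq_inv']
  exact (hdet.inv₀ h0).smul hadj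

theorem continuousOn_mulVec {n : ℕ} {A : ℝ → Matrix (Fin n) (Fin n) ℂ}
    {v : ℝ → Fin n → ℂ} {s : Set ℝ} (hA : ContinuousOn A s) (hv : ContinuousOn v s) :
    ContinuousOn (fun x => (A x).mulVec (v x)) s := by
  rw [continuousOn_iff_continuous_domRestrict] at *
  exact Continuous.matrix_mulVec hA hv

/-- Product rule for a matrix function, differentiable entrywise, applied to a vector
function. -/
theorem hasDerivWithinAt_mulVec {n : ℕ} {K : ℝ → Matrix (Fin n) (Fin n) ℂ}
    {K' : Matrix (Fin n) (Fin n) ℂ} {v : ℝ → Fin n → ℂ} {v' : Fin n → ℂ} {s : Set ℝ} {x : ℝ}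
    (hK : ∀ i j, HasDerivWithinAt (fun t => K t i j) (K' i j) s x)
    (hv : HasDerivWithinAt v v' s x) :
    HasDerivWithinAt (fun t => (K t).mulVec (v t))
      (K'.mulVec (v x) + (K x).mulVec v') s x := by
  rw [hasDerivWithinAt_pi] at hv ⊢
  intro i
  have h := HasDerivWithinAt.fun_sum (u := Finset.univ) fun j _ => (hK i j).mul (hv j)
  simpa [Matrix.mulVec, dotProduct, Finset.sum_add_distrib] using h

/-- The variation-of-constants form of `greenSol`. The integrand `G` is any continuous
function on all of `ℝ` that agrees with `K⁻¹ A⁻¹ f` on `[0,β]`. -/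
theorem greenSol_eq {n : ℕ} {A K : ℝ → Matrix (Fin n) (Fin n) ℂ}
    {M N : Matrix (Fin n) (Fin n) ℂ} {β : ℝ} {f G : ℝ → Fin n → ℂ} (hG : Continuous G)
    (hGf : ∀ y ∈ Icc (0:ℝ) β, G y = (K y)⁻¹.mulVec ((A y)⁻¹.mulVec (f y)))
    {x : ℝ} (hx : x ∈ Icc (0:ℝ) β) :
    greenSol n A K M N β f x = (K x).mulVec ((∫ y in (0:ℝ)..x, G y) -
      ((M + N * K β)⁻¹ * N * K β).mulVec (∫ y in (0:ℝ)..β, G y)) := by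
  set P := (M + N * K β)⁻¹ * N * K β with hP
  have hGi : IntegrableOn G (Icc 0 β) := hG.continuousOn.integrableOn_Icc
  have hGx : IntegrableOn ((Iic x).indicator G) (Icc 0 β) := hGi.indicator measurableSet_Iic
  let LK : (Fin n → ℂ) →L[ℂ] (Fin n → ℂ) := (K x).mulVecLin.toContinuousLinearMap
  let LP : (Fin n → ℂ) →L[ℂ] (Fin n → ℂ) := P.mulVecLin.toContinuousLinearMap
  have hker : ∀ y ∈ Icc (0:ℝ) β, (greenKernel n A K M N β x y).mulVec (f y)
      = LK ((Iic x).indicator G y - LP (G y)) := by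
    intro y hy
    change _ = (K x).mulVec ((Iic x).indicator G y - P.mulVec (G y))
    rw [greenKernel]
    split_ifs with h
    · rw [indicator_of_notMem (by simpa using h), hGf y hy]
      simp [hP, Matrix.mulVec_mulVec, Matrix.mulVec_neg, Matrix.neg_mulVec, Matrix.mul_assoc]
    · rw [indicator_of_mem (by simpa using h), hGf y hy]
      simp only [← hP, Matrix.mulVec_mulVec, ← Matrix.sub_mulVec]
      congr 1
      noncomm_ring
  have hset : Icc (0:ℝ) β ∩ Iic x = Icc 0 x := by
    ext y
    simp only [mem_inter_iff, mem_Icc, mem_Iic]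
    exact ⟨fun h => ⟨h.1.1, h.2⟩, fun h => ⟨⟨h.1, h.2.trans hx.2⟩, h.2⟩⟩
  rw [greenSol, setIntegral_congr_fun measurableSet_Icc hker,
    LK.integral_comp_comm (φ := fun y => (Iic x).indicator G y - LP (G y))
      (hGx.sub (LP.integrable_comp hGi)),
    integral_sub hGx (LP.integrable_comp hGi), LP.integral_comp_comm hGi,
    setIntegral_indicator measurableSet_Iic, hset, intervalIntegral.integral_of_le hx.1,
    intervalIntegral.integral_of_le (hx.1.trans hx.2), integral_Icc_eq_integral_Ioc,
    integral_Icc_eq_integral_Ioc]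
  rfl

/-- If `K` is a parallel transport for `D` and `M_β = M + N K(β)` is
invertible, then for every continuous `f` the function `ψ(x) = ∫₀^β k(x,y) f(y) dy`
is continuously differentiable on `[0,β]` and solves `A ψ′ + B ψ = f` with boundary
condition `M ψ(0) + N ψ(β) = 0`. -/
theorem statement10
    (β : ℝ) (hβ : 0 < β) (n : ℕ) (hn : 1 ≤ n)
    (A B : ℝ → Matrix (Fin n) (Fin n) ℂ)
    (hA : ∀ i j, ContinuousOn (fun x => A x i j) (Icc (0:ℝ) β))
    (hB : ∀ i j, ContinuousOn (fun x => B x i j) (Icc (0:ℝ) β))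
    (hAinv : ∀ x ∈ Icc (0:ℝ) β, IsUnit (A x))
    (K K' : ℝ → Matrix (Fin n) (Fin n) ℂ)
    (hK0 : K 0 = 1)
    (hKd : ∀ x ∈ Icc (0:ℝ) β, ∀ i j,
      HasDerivWithinAt (fun t => K t i j) (K' x i j) (Icc (0:ℝ) β) x)
    (hKeq : ∀ x ∈ Icc (0:ℝ) β, A x * K' x + B x * K x = 0)
    (hKinv : ∀ x ∈ Icc (0:ℝ) β, IsUnit (K x))
    (M N : Matrix (Fin n) (Fin n) ℂ)
    (hMβ : IsUnit (M + N * K β))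
    (f : ℝ → Fin n → ℂ) (hf : ContinuousOn f (Icc (0:ℝ) β)) :
    ∃ ψ' : ℝ → Fin n → ℂ,
      (∀ x ∈ Icc (0:ℝ) β,
        HasDerivWithinAt (greenSol n A K M N β f) (ψ' x) (Icc (0:ℝ) β) x) ∧
      ContinuousOn ψ' (Icc (0:ℝ) β) ∧
      (∀ x ∈ Icc (0:ℝ) β,
        Matrix.mulVec (A x) (ψ' x) + Matrix.mulVec (B x) (greenSol n A K M N β f x)
          = f x) ∧
      Matrix.mulVec M (greenSol n A K M N β f 0)
        + Matrix.mulVec N (greenSol n A K M N β f β) = 0 := by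
  have hK : ContinuousOn K (Icc 0 β) := continuousOn_pi.2 fun i => continuousOn_pi.2 fun j =>
    fun x hx => (hKd x hx i j).continuousWithinAt
  have hA' : ContinuousOn A (Icc 0 β) := continuousOn_pi.2 fun i => continuousOn_pi.2 (hA i)
  have hB' : ContinuousOn B (Icc 0 β) := continuousOn_pi.2 fun i => continuousOn_pi.2 (hB i)
  have hAi := continuousOn_matrix_inv hA' hAinv
  have hAf := continuousOn_mulVec hAi hf
  have hG₀ := continuousOn_mulVec (continuousOn_matrix_inv hK hKinv) hAf
  -- Extending `K⁻¹ A⁻¹ f` constantly beyond `[0,β]` makes its primitive differentiable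
  -- at the endpoints too.
  obtain ⟨G, hG, hGf⟩ : ∃ G : ℝ → Fin n → ℂ, Continuous G ∧
      ∀ y ∈ Icc (0:ℝ) β, G y = (K y)⁻¹.mulVec ((A y)⁻¹.mulVec (f y)) :=
    ⟨_, (continuousOn_iff_continuous_domRestrict.1 hG₀).Icc_extend' (h := hβ.le),
      fun y hy => IccExtend_of_mem hβ.le _ hy⟩
  set P := (M + N * K β)⁻¹ * N * K β with hP
  set v : ℝ → Fin n → ℂ := fun x =>
    (∫ y in (0:ℝ)..x, G y) - P.mulVec (∫ y in (0:ℝ)..β, G y) with hv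
  have hsol : ∀ x ∈ Icc (0:ℝ) β, greenSol n A K M N β f x = (K x).mulVec (v x) :=
    fun x hx => greenSol_eq hG hGf hx
  have hvd : ∀ x, HasDerivAt v (G x) x := fun x =>
    (hG.integral_hasStrictDerivAt 0 x).hasDerivAt.sub_const _
  have hvc : Continuous v := continuous_iff_continuousAt.2 fun x => (hvd x).continuousAt
  have hKG : ∀ x ∈ Icc (0:ℝ) β, (K x).mulVec (G x) = (A x)⁻¹.mulVec (f x) := fun x hx => by
    rw [hGf x hx, Matrix.mulVec_mulVec,
      Matrix.mul_nonsing_inv _ ((Matrix.isUnit_iff_isUnit_det _).1 (hKinv x hx)),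
      Matrix.one_mulVec]
  -- `K'` is continuous because the transport equation expresses it through `A`, `B` and `K`.
  have hK' : ∀ x ∈ Icc (0:ℝ) β, (K' x).mulVec (v x)
      = -(A x)⁻¹.mulVec ((B x).mulVec ((K x).mulVec (v x))) := fun x hx => by
    have h : K' x = -((A x)⁻¹ * (B x * K x)) := by
      rw [← Matrix.mul_neg, ← eq_neg_of_add_eq_zero_left (hKeq x hx), ← Matrix.mul_assoc,
        Matrix.nonsing_inv_mul _ ((Matrix.isUnit_iff_isUnit_det _).1 (hAinv x hx)),
        Matrix.one_mul]
    rw [h, Matrix.neg_mulVec, Matrix.mulVec_mulVec, Matrix.mulVec_mulVec,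
      Matrix.mul_assoc]
  refine ⟨fun x => (K' x).mulVec (v x) + (K x).mulVec (G x), fun x hx => ?_, ?_,
    fun x hx => ?_, ?_⟩
  · exact (hasDerivWithinAt_mulVec (hKd x hx) (hvd x).hasDerivWithinAt).congr_of_mem hsol hx
  · refine ContinuousOn.add ?_ (continuousOn_mulVec hK hG.continuousOn)
    exact (continuousOn_mulVec hAi (continuousOn_mulVec hB'
      (continuousOn_mulVec hK hvc.continuousOn))).neg.congr hK'
  · have h := congrArg (fun C => C.mulVec (v x)) (hKeq x hx)
    simp only [Matrix.add_mulVec, ← Matrix.mulVec_mulVec, Matrix.zero_mulVec] at h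
    beta_reduce
    rw [hsol x hx, hKG x hx, Matrix.mulVec_add, add_right_comm, h, zero_add,
      Matrix.mulVec_mulVec,
      Matrix.mul_nonsing_inv _ ((Matrix.isUnit_iff_isUnit_det _).1 (hAinv x hx)),
      Matrix.one_mulVec]
  · have hMP : M * P + N * (K β * P) = N * K β := by
      rw [← Matrix.mul_assoc N, ← Matrix.add_mul, hP, Matrix.mul_assoc _ N, ← Matrix.mul_assoc,
        Matrix.mul_nonsing_inv _ ((Matrix.isUnit_iff_isUnit_det _).1 hMβ), Matrix.one_mul]
    rw [hsol 0 (left_mem_Icc.2 hβ.le), hsol β (right_mem_Icc.2 hβ.le)]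
    simp only [hv, hK0, intervalIntegral.integral_same, zero_sub, Matrix.one_mul,
      Matrix.mulVec_neg, Matrix.mulVec_sub, Matrix.mulVec_mulVec]
    rw [← hMP, Matrix.add_mulVec]
    abel
end
end
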